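/- Soundness and completeness of KH^pub: for every formula φ ∈ L_KH^pub, φ is derivable in the axiom system KH^pub if and only if φ is valid on the class KH. (This may assume, as given, that the base system KH is sound and complete for KH with respect to the update-free language L_KH.) -/

import Mathlib

/-- A Kripke model (raw data): valuation, and knowledge and hope relations for `n` agents. -/
structure Model (n : ℕ) (W : Type) where
  val : ℕ → W → Prop
  K : Fin n → W → W → Prop
  H : Fin n → W → W → Prop

/-- Membership in the class KH: each `K i` is an equivalence relation, each `H i` is
shift-serial, `H i ⊆ K i` (HinK), and oneH. -/
def Model.KH {n : ℕ} {W : Type} (M : Model n W) : Prop :=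
  (∀ i, Equivalence (M.K i)) ∧
  (∀ i w v, M.H i w v → ∃ z, M.H i v z) ∧
  (∀ i w v, M.H i w v → M.K i w v) ∧
  (∀ i w v, (∃ x, M.H i w x) → (∃ x, M.H i v x) → M.K i w v → M.H i w v)

/-- Formulas of the language `L_KH^pub`: atoms, negation, conjunction, knowledge `K i`,
hope `H i`, and public hope update `[φ_1,…,φ_n]ψ` (the tuple given as `Fin n → Form n`). -/
inductive Form (n : ℕ) : Type where
  | atom : ℕ → Form n
  | neg : Form n → Form n
  | and : Form n → Form n → Form n
  | know : Fin n → Form n → Form n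
  | hope : Fin n → Form n → Form n
  | upd : (Fin n → Form n) → Form n → Form n

/-- Replace the hope relations: `w H_i^χ v` iff `w K_i v`, `c i` holds at `w`, and at `v`. -/
def Model.hopeUpd {n : ℕ} {W : Type} (M : Model n W) (c : Fin n → W → Prop) : Model n W where
  val := M.val
  K := M.K
  H := fun i w v => M.K i w v ∧ c i w ∧ c i v

/-- Truth at a world. -/
def sat {n : ℕ} {W : Type} : Model n W → W → Form n → Prop
  | M, w, .atom p => M.val p w
  | M, w, .neg φ => ¬ sat M w φ
  | M, w, .and φ ψ => sat M w φ ∧ sat M w ψ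
  | M, w, .know i φ => ∀ v, M.K i w v → sat M v φ
  | M, w, .hope i φ => ∀ v, M.H i w v → sat M v φ
  | M, w, .upd φs ψ => sat (M.hopeUpd (fun i v => sat M v (φs i))) w ψ

/-- The publicly updated model `M^{φ⃗}`. -/
def Model.pubUpdate {n : ℕ} {W : Type} (M : Model n W) (φs : Fin n → Form n) : Model n W :=
  M.hopeUpd (fun i v => sat M v (φs i))

def ftop {n : ℕ} : Form n := .neg (.and (.atom 0) (.neg (.atom 0)))
def fbot {n : ℕ} : Form n := .neg ftop
def fimpl {n : ℕ} (φ ψ : Form n) : Form n := .neg (.and φ (.neg ψ))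
def forr {n : ℕ} (φ ψ : Form n) : Form n := .neg (.and (.neg φ) (.neg ψ))
def fiff {n : ℕ} (φ ψ : Form n) : Form n := .and (fimpl φ ψ) (fimpl ψ φ)
/-- `¬H_i⊥`: agent `i` is correct. -/
def fcorrect {n : ℕ} (i : Fin n) : Form n := .neg (.hope i fbot)

/-- Validity on the class KH: true at every world of every (nonempty) model in KH. -/
def Valid {n : ℕ} (φ : Form n) : Prop :=
  ∀ (W : Type) (M : Model n W), Nonempty W → M.KH → ∀ w : W, sat M w φ

/-- `φ` is a propositional tautology: it is true under every assignment of truth values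
to formulas that respects negation and conjunction (atoms, `K`, `H`, and update
formulas are treated as opaque). -/
def Tautology {n : ℕ} (φ : Form n) : Prop :=
  ∀ v : Form n → Prop,
    (∀ ψ, v (.neg ψ) ↔ ¬ v ψ) → (∀ ψ χ, v (.and ψ χ) ↔ (v ψ ∧ v χ)) → v φ

/-- The axiom system `KH^pub`: the system `KH` (propositional tautologies, `H†`, `K^K`,
`4^K`, `5^K`, `T^K`, the `KH` axiom, modus ponens, necessitation for `K_i`) extended
with the reduction axioms for public hope updates. -/
inductive DerivPub {n : ℕ} : Form n → Prop where
  | taut {φ} : Tautology φ → DerivPub φ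
  | hdag (i : Fin n) : DerivPub (.hope i (.neg (.hope i fbot)))
  | kK (i : Fin n) (φ ψ : Form n) :
      DerivPub (fimpl (.and (.know i (fimpl φ ψ)) (.know i φ)) (.know i ψ))
  | fourK (i : Fin n) (φ : Form n) : DerivPub (fimpl (.know i φ) (.know i (.know i φ)))
  | fiveK (i : Fin n) (φ : Form n) :
      DerivPub (fimpl (.neg (.know i φ)) (.know i (.neg (.know i φ))))
  | tK (i : Fin n) (φ : Form n) : DerivPub (fimpl (.know i φ) φ)
  | kh (i : Fin n) (φ : Form n) :
      DerivPub (fiff (.hope i φ) (fimpl (fcorrect i) (.know i (fimpl (fcorrect i) φ))))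
  | mp {φ ψ : Form n} : DerivPub (fimpl φ ψ) → DerivPub φ → DerivPub ψ
  | necK {φ : Form n} (i : Fin n) : DerivPub φ → DerivPub (.know i φ)
  | redAtom (φs : Fin n → Form n) (p : ℕ) : DerivPub (fiff (.upd φs (.atom p)) (.atom p))
  | redNeg (φs : Fin n → Form n) (ψ : Form n) :
      DerivPub (fiff (.upd φs (.neg ψ)) (.neg (.upd φs ψ)))
  | redAnd (φs : Fin n → Form n) (ψ ξ : Form n) :
      DerivPub (fiff (.upd φs (.and ψ ξ)) (.and (.upd φs ψ) (.upd φs ξ)))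
  | redKnow (φs : Fin n → Form n) (i : Fin n) (ψ : Form n) :
      DerivPub (fiff (.upd φs (.know i ψ)) (.know i (.upd φs ψ)))
  | redHope (φs : Fin n → Form n) (i : Fin n) (ψ : Form n) :
      DerivPub (fiff (.upd φs (.hope i ψ))
        (fimpl (φs i) (.know i (fimpl (φs i) (.upd φs ψ)))))
  | redUpd (φs χs : Fin n → Form n) (ψ : Form n) :
      DerivPub (fiff (.upd φs (.upd χs ψ)) (.upd (fun i => .upd φs (χs i)) ψ))

/-- The base axiom system `KH` (on the update-free language): propositional tautologies,
`H†`, `K^K`, `4^K`, `5^K`, `T^K`, the `KH` axiom, modus ponens, and necessitation. -/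
inductive DerivKH {n : ℕ} : Form n → Prop where
  | taut {φ} : Tautology φ → DerivKH φ
  | hdag (i : Fin n) : DerivKH (.hope i (.neg (.hope i fbot)))
  | kK (i : Fin n) (φ ψ : Form n) :
      DerivKH (fimpl (.and (.know i (fimpl φ ψ)) (.know i φ)) (.know i ψ))
  | fourK (i : Fin n) (φ : Form n) : DerivKH (fimpl (.know i φ) (.know i (.know i φ)))
  | fiveK (i : Fin n) (φ : Form n) :
      DerivKH (fimpl (.neg (.know i φ)) (.know i (.neg (.know i φ))))
  | tK (i : Fin n) (φ : Form n) : DerivKH (fimpl (.know i φ) φ)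
  | kh (i : Fin n) (φ : Form n) :
      DerivKH (fiff (.hope i φ) (fimpl (fcorrect i) (.know i (fimpl (fcorrect i) φ))))
  | mp {φ ψ : Form n} : DerivKH (fimpl φ ψ) → DerivKH φ → DerivKH ψ
  | necK {φ : Form n} (i : Fin n) : DerivKH φ → DerivKH (.know i φ)

/-- Update-free formulas: the sublanguage `L_KH` of `L_KH^pub`. -/
inductive UpdFree {n : ℕ} : Form n → Prop where
  | atom (p : ℕ) : UpdFree (.atom p)
  | neg {φ} : UpdFree φ → UpdFree (.neg φ)
  | and {φ ψ} : UpdFree φ → UpdFree ψ → UpdFree (.and φ ψ)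
  | know {φ} (i : Fin n) : UpdFree φ → UpdFree (.know i φ)
  | hope {φ} (i : Fin n) : UpdFree φ → UpdFree (.hope i φ)

/-
The reduction axioms rewrite an update `[φ⃗]ψ` by moving it inwards through `ψ` until it disappears
at the atoms, so every formula is provably equivalent to an update-free one; completeness then
follows from completeness of `KH` on `L_KH`. The delicate axiom is the one for `[φ⃗][χ⃗]ψ`: its
right-hand side has updates inside the announced tuple, and the system has no rule for replacing
provable equivalents there. This is why the translation of `[φ⃗]ψ` is compared with `[φ⃗]ψ` for all
tuples at once, up to provable equivalence of their components.
-/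

/-- Truth assignments to formulas that respect negation and conjunction, the ones quantified over
in `Tautology`. Truth at a world is one of them, so propositional reasoning can be done once for
both syntax and semantics. -/
structure IsBooleanValuation {n : ℕ} (v : Form n → Prop) : Prop where
  neg_iff : ∀ φ, v (.neg φ) ↔ ¬ v φ
  and_iff : ∀ φ ψ, v (.and φ ψ) ↔ (v φ ∧ v ψ)

namespace IsBooleanValuation

variable {n : ℕ} {v : Form n → Prop}

theorem fimpl_iff (hv : IsBooleanValuation v) (φ ψ : Form n) : v (fimpl φ ψ) ↔ (v φ → v ψ) := by
  rw [fimpl, hv.neg_iff, hv.and_iff, hv.neg_iff, not_and_not_right]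

theorem fiff_iff (hv : IsBooleanValuation v) (φ ψ : Form n) :
    v (fiff φ ψ) ↔ (v φ ↔ v ψ) := by
  rw [fiff, hv.and_iff, hv.fimpl_iff, hv.fimpl_iff]
  exact iff_def.symm

theorem not_fbot (hv : IsBooleanValuation v) : ¬ v fbot := by
  simp [fbot, ftop, hv.neg_iff, hv.and_iff]

end IsBooleanValuation

/-- Knowledge relativized to `χ`, the shape shared by the axiom `KH` (with `χ = ¬H_i⊥`) and the
reduction axiom for hope (with `χ = φ_i`). -/
def Form.relKnow {n : ℕ} (i : Fin n) (χ ψ : Form n) : Form n :=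
  fimpl χ (.know i (fimpl χ ψ))

section Soundness

variable {n : ℕ} {W : Type} {M : Model n W}

theorem isBooleanValuation_sat (M : Model n W) (w : W) : IsBooleanValuation (sat M w) where
  neg_iff _ := Iff.rfl
  and_iff _ _ := Iff.rfl

theorem sat_fimpl {w : W} {φ ψ : Form n} :
    sat M w (fimpl φ ψ) ↔ (sat M w φ → sat M w ψ) :=
  (isBooleanValuation_sat M w).fimpl_iff φ ψ

theorem sat_fiff {w : W} {φ ψ : Form n} :
    sat M w (fiff φ ψ) ↔ (sat M w φ ↔ sat M w ψ) :=
  (isBooleanValuation_sat M w).fiff_iff φ ψ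

theorem sat_fcorrect {w : W} {i : Fin n} : sat M w (fcorrect i) ↔ ∃ v, M.H i w v := by
  simp [fcorrect, sat, (isBooleanValuation_sat M _).not_fbot]

theorem sat_relKnow {w : W} {i : Fin n} {χ ψ : Form n} :
    sat M w (.relKnow i χ ψ) ↔
      ∀ v, M.K i w v ∧ sat M w χ ∧ sat M v χ → sat M v ψ := by
  simp only [Form.relKnow, sat_fimpl, sat]
  exact ⟨fun h v ⟨hK, hw, hv⟩ => h hw v hK hv, fun h hw v hK hv => h v ⟨hK, hw, hv⟩⟩

-- A model in KH is its own update by the tuple of the formulas `¬H_i⊥`; hence the axiom `KH` and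
-- the reduction axiom for hope are sound for the same reason.
theorem Model.KH.hope_iff (hM : M.KH) {i : Fin n} {w v : W} :
    M.H i w v ↔ M.K i w v ∧ sat M w (fcorrect i) ∧ sat M v (fcorrect i) := by
  obtain ⟨-, shiftSerial, hope_le_know, oneH⟩ := hM
  simp only [sat_fcorrect]
  exact ⟨fun h => ⟨hope_le_know i w v h, ⟨v, h⟩, shiftSerial i w v h⟩,
    fun ⟨hK, hw, hv⟩ => oneH i w v hw hv hK⟩

theorem DerivPub.sat {φ : Form n} (h : DerivPub φ) (hM : M.KH) (w : W) : sat M w φ := by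
  have hK := hM.1
  induction h generalizing w with
  | taut h =>
    have hv := isBooleanValuation_sat M w
    exact h _ hv.neg_iff hv.and_iff
  | hdag i => exact fun v hwv => (hM.hope_iff.1 hwv).2.2
  | kK i φ ψ =>
    exact sat_fimpl.2 fun ⟨himp, hφ⟩ v hwv => sat_fimpl.1 (himp v hwv) (hφ v hwv)
  | fourK i φ =>
    exact sat_fimpl.2 fun h v hwv u hvu => h u ((hK i).trans hwv hvu)
  | fiveK i φ =>
    exact sat_fimpl.2 fun h v hwv hv =>
      h fun u hwu => hv u ((hK i).trans ((hK i).symm hwv) hwu)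
  | tK i φ => exact sat_fimpl.2 fun h => h w ((hK i).refl w)
  | kh i φ =>
    exact sat_fiff.2 <| (forall_congr' fun _ => imp_congr_left hM.hope_iff).trans sat_relKnow.symm
  | mp _ _ himp hφ => exact sat_fimpl.1 (himp w) (hφ w)
  | necK i _ h => exact fun v _ => h v
  | redHope φs i ψ => exact sat_fiff.2 (sat_relKnow (χ := φs i) (ψ := .upd φs ψ)).symm
  | redAtom | redNeg | redAnd | redKnow | redUpd => exact sat_fiff.2 Iff.rfl

theorem DerivPub.valid {φ : Form n} (h : DerivPub φ) : Valid φ :=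
  fun _ _ _ hM w => h.sat hM w

end Soundness

section Derivability

variable {n : ℕ} {φ φ' ψ ψ' χ : Form n}

theorem DerivKH.derivPub (h : DerivKH φ) : DerivPub φ := by
  induction h with
  | taut h => exact .taut h
  | hdag i => exact .hdag i
  | kK i φ ψ => exact .kK i φ ψ
  | fourK i φ => exact .fourK i φ
  | fiveK i φ => exact .fiveK i φ
  | tK i φ => exact .tK i φ
  | kh i φ => exact .kh i φ
  | mp _ _ himp hφ => exact .mp himp hφ
  | necK i _ h => exact .necK i h

namespace DerivPub

theorem of_forall_isBooleanValuation (h : ∀ v, IsBooleanValuation v → v φ) : DerivPub φ :=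
  .taut fun v hneg hand => h v ⟨hneg, hand⟩

theorem of_entails (hφ : DerivPub φ) (h : ∀ v, IsBooleanValuation v → v φ → v ψ) : DerivPub ψ :=
  .mp (of_forall_isBooleanValuation fun v hv => (hv.fimpl_iff φ ψ).2 (h v hv)) hφ

theorem of_entails₂ (hφ : DerivPub φ) (hψ : DerivPub ψ)
    (h : ∀ v, IsBooleanValuation v → v φ → v ψ → v χ) : DerivPub χ :=
  .mp (hφ.of_entails fun v hv hvφ => (hv.fimpl_iff ψ χ).2 (h v hv hvφ)) hψ

theorem know_mono (i : Fin n) (h : DerivPub (fimpl φ ψ)) :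
    DerivPub (fimpl (.know i φ) (.know i ψ)) :=
  (DerivPub.necK i h).of_entails₂ (.kK i φ ψ) fun v hv hnec hdist => by
    rw [hv.fimpl_iff, hv.and_iff] at hdist
    exact (hv.fimpl_iff _ _).2 fun hφ => hdist ⟨hnec, hφ⟩

end DerivPub

/-- Provable equivalence in `KH^pub`, the relation in which the reduction axioms are used as
rewrite rules. -/
def ProvEquiv (φ ψ : Form n) : Prop := DerivPub (fiff φ ψ)

namespace ProvEquiv

theorem refl (φ : Form n) : ProvEquiv φ φ :=
  .of_forall_isBooleanValuation fun _ hv => (hv.fiff_iff φ φ).2 Iff.rfl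

theorem symm (h : ProvEquiv φ ψ) : ProvEquiv ψ φ :=
  DerivPub.of_entails h fun _ hv h => (hv.fiff_iff ψ φ).2 ((hv.fiff_iff φ ψ).1 h).symm

theorem trans (h : ProvEquiv φ ψ) (h' : ProvEquiv ψ χ) : ProvEquiv φ χ :=
  DerivPub.of_entails₂ h h' fun _ hv h h' =>
    (hv.fiff_iff φ χ).2 (((hv.fiff_iff φ ψ).1 h).trans ((hv.fiff_iff ψ χ).1 h'))

theorem derivPub_fimpl (h : ProvEquiv φ ψ) : DerivPub (fimpl φ ψ) :=
  DerivPub.of_entails h fun _ hv h => (hv.fimpl_iff φ ψ).2 ((hv.fiff_iff φ ψ).1 h).1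

theorem neg (h : ProvEquiv φ ψ) : ProvEquiv φ.neg ψ.neg :=
  DerivPub.of_entails h fun _ hv h => by
    simpa only [hv.fiff_iff, hv.neg_iff, not_iff_not] using h

theorem and (h : ProvEquiv φ φ') (h' : ProvEquiv ψ ψ') : ProvEquiv (φ.and ψ) (φ'.and ψ') :=
  DerivPub.of_entails₂ h h' fun _ hv h h' => by
    rw [hv.fiff_iff] at h h' ⊢
    simpa only [hv.and_iff] using and_congr h h'

theorem fimpl (h : ProvEquiv φ φ') (h' : ProvEquiv ψ ψ') :
    ProvEquiv (fimpl φ ψ) (fimpl φ' ψ') :=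
  (h.and h'.neg).neg

theorem know (i : Fin n) (h : ProvEquiv φ ψ) : ProvEquiv (.know i φ) (.know i ψ) :=
  (h.derivPub_fimpl.know_mono i).of_entails₂ (h.symm.derivPub_fimpl.know_mono i)
    fun _ hv hmp hmpr => by
      rw [hv.fimpl_iff] at hmp hmpr
      exact (hv.fiff_iff _ _).2 ⟨hmp, hmpr⟩

theorem relKnow (i : Fin n) (h : ProvEquiv φ φ') (h' : ProvEquiv ψ ψ') :
    ProvEquiv (.relKnow i φ ψ) (.relKnow i φ' ψ') :=
  h.fimpl ((h.fimpl h').know i)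

theorem hope (i : Fin n) (h : ProvEquiv φ ψ) : ProvEquiv (.hope i φ) (.hope i ψ) :=
  have hope_relKnow (χ : Form n) : ProvEquiv (.hope i χ) (.relKnow i (fcorrect i) χ) := .kh i χ
  (hope_relKnow φ).trans (((refl (fcorrect i)).relKnow i h).trans (hope_relKnow ψ).symm)

theorem valid_iff (h : ProvEquiv φ ψ) : Valid φ ↔ Valid ψ :=
  forall₂_congr fun _ _ => forall₃_congr fun _ hM w => sat_fiff.1 (DerivPub.sat h hM w)

theorem derivPub_iff (h : ProvEquiv φ ψ) : DerivPub φ ↔ DerivPub ψ :=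
  ⟨.mp h.derivPub_fimpl, .mp h.symm.derivPub_fimpl⟩

end ProvEquiv

end Derivability

section Reduction

variable {n : ℕ}

/-- The translation of `[θ⃗]ψ` obtained by reading the reduction axioms from left to right. Its
result is update-free as soon as the components of `θ⃗` are. -/
def Form.elimUpd : (Fin n → Form n) → Form n → Form n
  | _, .atom p => .atom p
  | θs, .neg ψ => .neg (elimUpd θs ψ)
  | θs, .and ψ ξ => .and (elimUpd θs ψ) (elimUpd θs ξ)
  | θs, .know i ψ => .know i (elimUpd θs ψ)
  | θs, .hope i ψ => .relKnow i (θs i) (elimUpd θs ψ)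
  | θs, .upd χs ψ => elimUpd (fun i => elimUpd θs (χs i)) ψ

/-- The translation of `L_KH^pub` into `L_KH`, which reduces the announced tuple of an update
before pushing the update inwards. -/
def Form.reduce : Form n → Form n
  | .atom p => .atom p
  | .neg ψ => .neg (reduce ψ)
  | .and ψ ξ => .and (reduce ψ) (reduce ξ)
  | .know i ψ => .know i (reduce ψ)
  | .hope i ψ => .hope i (reduce ψ)
  | .upd χs ψ => elimUpd (fun i => reduce (χs i)) ψ

theorem UpdFree.fimpl {φ ψ : Form n} (hφ : UpdFree φ) (hψ : UpdFree ψ) : UpdFree (fimpl φ ψ) :=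
  .neg (.and hφ (.neg hψ))

theorem UpdFree.relKnow (i : Fin n) {χ ψ : Form n} (hχ : UpdFree χ) (hψ : UpdFree ψ) :
    UpdFree (.relKnow i χ ψ) :=
  hχ.fimpl (.know i (hχ.fimpl hψ))

theorem updFree_elimUpd {θs : Fin n → Form n} (hθs : ∀ i, UpdFree (θs i)) (ψ : Form n) :
    UpdFree (.elimUpd θs ψ) := by
  induction ψ generalizing θs with
  | atom p => exact .atom p
  | neg ψ ih => exact .neg (ih hθs)
  | and ψ ξ ihψ ihξ => exact .and (ihψ hθs) (ihξ hθs)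
  | know i ψ ih => exact .know i (ih hθs)
  | hope i ψ ih => exact .relKnow i (hθs i) (ih hθs)
  | upd χs _ ihχs ih => exact ih fun i => ihχs i hθs

theorem updFree_reduce (φ : Form n) : UpdFree φ.reduce := by
  induction φ with
  | atom p => exact .atom p
  | neg ψ ih => exact .neg ih
  | and ψ ξ ihψ ihξ => exact .and ihψ ihξ
  | know i ψ ih => exact .know i ih
  | hope i ψ ih => exact .hope i ih
  | upd χs ψ ihχs _ => exact updFree_elimUpd ihχs ψ

theorem provEquiv_upd_elimUpd {φs θs : Fin n → Form n} (h : ∀ i, ProvEquiv (φs i) (θs i))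
    (ψ : Form n) : ProvEquiv (.upd φs ψ) (.elimUpd θs ψ) := by
  induction ψ generalizing φs θs with
  | atom p => exact .redAtom φs p
  | neg ψ ih => exact .trans (.redNeg φs ψ) (ih h).neg
  | and ψ ξ ihψ ihξ => exact .trans (.redAnd φs ψ ξ) ((ihψ h).and (ihξ h))
  | know i ψ ih => exact .trans (.redKnow φs i ψ) ((ih h).know i)
  | hope i ψ ih => exact .trans (.redHope φs i ψ) ((h i).relKnow i (ih h))
  | upd χs ψ ihχs ih => exact .trans (.redUpd φs χs ψ) (ih fun i => ihχs i h)

theorem provEquiv_reduce (φ : Form n) : ProvEquiv φ φ.reduce := by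
  induction φ with
  | atom p => exact .refl _
  | neg ψ ih => exact ih.neg
  | and ψ ξ ihψ ihξ => exact ihψ.and ihξ
  | know i ψ ih => exact ih.know i
  | hope i ψ ih => exact ih.hope i
  | upd χs ψ ihχs _ => exact provEquiv_upd_elimUpd ihχs ψ

theorem Valid.derivPub (hcomplete : ∀ φ : Form n, UpdFree φ → Valid φ → DerivKH φ) {φ : Form n}
    (hφ : Valid φ) : DerivPub φ := by
  have hequiv : ProvEquiv φ φ.reduce := provEquiv_reduce φ
  have hreduce : DerivKH φ.reduce :=
    hcomplete φ.reduce (updFree_reduce φ) (hequiv.valid_iff.1 hφ)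
  exact hequiv.derivPub_iff.2 hreduce.derivPub

end Reduction

/-- soundness and completeness of `KH^pub`: a formula of `L_KH^pub` is
derivable in `KH^pub` iff it is valid on the class KH. The hypothesis `hbase` is the
given soundness and completeness of the base system `KH` for the update-free
language `L_KH`. -/
theorem khpub_sound_complete {n : ℕ} (hn : 0 < n)
    (hbase : ∀ φ : Form n, UpdFree φ → (DerivKH φ ↔ Valid φ)) :
    ∀ φ : Form n, DerivPub φ ↔ Valid φ :=
  fun _ => ⟨DerivPub.valid, Valid.derivPub fun φ hfree => (hbase φ hfree).2⟩
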